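/- Let n ≥ 2 and a = (a_1,…,a_n), a' = (a'_1,…,a'_n) ∈ ℂ^n with every a_j and a'_k purely imaginary, and let s ∈ ℂ with Re(s) > 0. Then I_{n,n;a,a'}(s) = Γ_ℝ(n·s+|a|+|a'|) · (2^{n−1}/(2πi)^{n−1})·∫_{s_1,…,s_{n−1}} U_{n,a}(s−s_1, 2s−s_2, …, (n−1)s−s_{n−1})·U_{n,a'}(s_1,…,s_{n−1}) ds_1⋯ds_{n−1}. -/

import Mathlib

open MeasureTheory Complex

noncomputable section

/-- `Γ_ℝ(s) = π^{-s/2} Γ(s/2)`. -/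
def GammaR (s : ℂ) : ℂ := (Real.pi : ℂ) ^ (-s / 2) * Complex.Gamma (s / 2)

/-- Modified Bessel function of the second kind, via its integral representation. -/
def BesselK (ν : ℂ) (y : ℝ) : ℂ :=
  (1 / 2) * ∫ t in Set.Ioi (0 : ℝ),
    Complex.exp (-((y : ℂ) / 2) * ((t : ℂ) + 1 / (t : ℂ))) * (t : ℂ) ^ ν / (t : ℂ)

/-- Extend a finite real tuple to `ℕ`, defaulting to `1`. -/
def extR {k : ℕ} (t : Fin k → ℝ) : ℕ → ℝ := fun i => if h : i < k then t ⟨i, h⟩ else 1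

/-- Extend a finite real tuple to `ℕ`, defaulting to `0`. -/
def extR0 {k : ℕ} (t : Fin k → ℝ) : ℕ → ℝ := fun i => if h : i < k then t ⟨i, h⟩ else 0

/-- The positive orthant. -/
def posSet (k : ℕ) : Set (Fin k → ℝ) := {t | ∀ j, 0 < t j}

/-- `|a| = a_1 + ⋯ + a_n` (0-based indexing). -/
def sumA (n : ℕ) (a : ℕ → ℂ) : ℂ := ∑ j ∈ Finset.range n, a j

/-- `ã_j = a_{j+1} + a_1/(n-1)` (0-based indexing). -/
def tildeA (n : ℕ) (a : ℕ → ℂ) : ℕ → ℂ := fun j => a (j + 1) + a 0 / ((n : ℂ) - 1)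

/-- The normalized radial part `Ŵ^A_{n,a}` of the class one `GL_n(ℝ)` Whittaker function,
as a function of `(y_1,…,y_{n-1})` (0-based indexing). -/
def WhittAr : ℕ → (ℕ → ℂ) → (ℕ → ℝ) → ℂ
  | 0, _, _ => 1
  | 1, _, _ => 1
  | 2, a, y => 2 * ((y 0 : ℂ) ^ ((a 0 + a 1) / 2)) *
      BesselK ((a 0 - a 1) / 2) (2 * Real.pi * y 0)
  | (n + 3), a, y =>
      ∫ t in posSet (n + 2),
        WhittAr (n + 2) (tildeA (n + 3) a)
            (fun j => y (j + 1) * Real.sqrt (extR t (j + 1) / extR t j)) *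
          (∏ j ∈ Finset.range (n + 2),
            Complex.exp (((-(Real.pi * y j) ^ 2 * extR t j - 1 / extR t j : ℝ) : ℂ)) *
              ((Real.pi * y j : ℝ) : ℂ) ^ ((((n + 2 - j : ℕ) : ℂ) * a 0) / ((n + 2 : ℕ) : ℂ)) *
              ((extR t j : ℝ) : ℂ) ^ ((((n + 3 : ℕ) : ℂ) * a 0) / (2 * ((n + 2 : ℕ) : ℂ)))) *
          ((Real.pi * extR t (n + 1) : ℝ) : ℂ) ^ (-(sumA (n + 3) a) / 2) *
          (∏ j ∈ Finset.range (n + 2), ((extR t j : ℝ) : ℂ))⁻¹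

/-- `Ŵ^A_{n,a}` as a function of the full tuple `(y_1,…,y_n)`. -/
def WhittAhat (n : ℕ) (a : ℕ → ℂ) (y : ℕ → ℝ) : ℂ :=
  ((y (n - 1) : ℝ) : ℂ) ^ sumA n a * WhittAr n a y

/-- The Mellin transform `U_{n,a}` (0-based: `s j` stands for `s_{j+1}`). -/
def Ufun (n : ℕ) (a : ℕ → ℂ) (s : ℕ → ℂ) : ℂ :=
  ∫ y in posSet (n - 1),
    WhittAr n a (extR y) *
      ∏ j ∈ Finset.range (n - 1), ((extR y j : ℝ) : ℂ) ^ s j / ((extR y j : ℝ) : ℂ)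

/-- The normalized radial part `Ŵ^B_{n,b}` of the class one `SO_{2n+1}(ℝ)` Whittaker function. -/
def WhittBr : ℕ → (ℕ → ℂ) → (ℕ → ℝ) → ℂ
  | 0, _, _ => 1
  | 1, b, y => 2 * BesselK (b 0 / 2) (2 * Real.pi * y 0)
  | (n + 2), b, y =>
      ∫ p in (posSet (n + 2) ×ˢ posSet (n + 1)),
        WhittBr (n + 1) b
            (fun j =>
              if j < n then
                y (j + 1) *
                  Real.sqrt (extR p.1 (j + 1) * extR p.2 (j + 1) /
                    (extR p.1 (j + 2) * extR p.2 j))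
              else y (n + 1) * Real.sqrt (extR p.1 (n + 1) / extR p.2 n)) *
          (∏ j ∈ Finset.range (n + 2),
            Complex.exp (((-(Real.pi * y j) ^ 2 * extR p.1 j - 1 / extR p.1 j : ℝ) : ℂ)) *
              ((Real.pi * y j : ℝ) : ℂ) ^ b (n + 1)) *
          (∏ j ∈ Finset.range (n + 1),
            Complex.exp (((-(Real.pi * y j) ^ 2 * (extR p.1 j / extR p.1 (j + 1)) * extR p.2 j -
                  1 / extR p.2 j : ℝ) : ℂ)) *
              ((extR p.1 (j + 1) * extR p.2 j : ℝ) : ℂ) ^ (b (n + 1) / 2)) *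
          ((extR p.1 0 : ℝ) : ℂ) ^ b (n + 1) *
          (∏ j ∈ Finset.range (n + 1), ((extR p.2 j : ℝ) : ℂ))⁻¹ *
          (∏ j ∈ Finset.range (n + 2), ((extR p.1 j : ℝ) : ℂ))⁻¹

/-- The Mellin transform `V_{n,b}` (0-based: `s j` stands for `s_{j+1}`). -/
def Vfun (n : ℕ) (b : ℕ → ℂ) (s : ℕ → ℂ) : ℂ :=
  ∫ y in posSet n,
    WhittBr n b (extR y) *
      ∏ j ∈ Finset.range n, ((extR y j : ℝ) : ℂ) ^ s j / ((extR y j : ℝ) : ℂ)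

/-- Integral over the vertical line `Re z = c`, i.e. `i·∫_ℝ f(c+it) dt`. -/
def VInt (c : ℝ) (f : ℂ → ℂ) : ℂ := Complex.I * ∫ t : ℝ, f (c + t * Complex.I)

/-- Iterated integral over `k` vertical lines with abscissas `c 0, …, c (k-1)`;
the integrand is fed the contour points as a 0-based sequence. -/
def VIntK (k : ℕ) (c : ℕ → ℝ) (f : (ℕ → ℂ) → ℂ) : ℂ :=
  Complex.I ^ k * ∫ t : Fin k → ℝ, f (fun i => (c i : ℂ) + (extR0 t i : ℝ) * Complex.I)

/-- The archimedean `GL_n × GL_n` zeta integral in torus coordinates. -/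
def zetaGLGL (n : ℕ) (a a' : ℕ → ℂ) (s : ℂ) : ℂ :=
  (2 : ℂ) ^ n * ∫ y in posSet n,
    Complex.exp (((-(Real.pi * extR y (n - 1) ^ 2) : ℝ) : ℂ)) *
      WhittAhat n a (extR y) * WhittAhat n a' (extR y) *
      ∏ j ∈ Finset.range n,
        ((extR y j : ℝ) : ℂ) ^ (((j + 1 : ℕ) : ℂ) * s) / ((extR y j : ℝ) : ℂ)

section Plancherel

open scoped FourierTransform ComplexConjugate ContDiff SchwartzMap

variable {E : Type*} [NormedAddCommGroup E] [InnerProductSpace ℝ E] [FiniteDimensional ℝ E]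
  [MeasurableSpace E] [BorelSpace E]

/-- The Fourier transform of the `L²` class of an integrable square-integrable function is
represented by the Fourier integral. -/
theorem fourier_toLp_ae_eq {f : E → ℂ} (hf : Integrable f) (hf2 : MemLp f 2) :
    (𝓕 (hf2.toLp f) : Lp (α := E) ℂ 2) =ᵐ[volume] 𝓕 f := by
  have hcont : Continuous (𝓕 f) :=
    VectorFourier.fourierIntegral_continuous Real.continuous_fourierChar
      continuous_inner hf
  refine ae_eq_of_integral_contDiff_smul_eq
    ((Lp.memLp _).locallyIntegrable (by norm_num)) hcont.locallyIntegrable fun g hg hgc => ?_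
  have hg' : ContDiff ℝ ∞ fun x => (g x : ℂ) := Complex.ofRealCLM.contDiff.comp hg
  have hgc' : HasCompactSupport fun x => (g x : ℂ) := hgc.comp_left (g := ((↑) : ℝ → ℂ)) rfl
  set φ : 𝓢(E, ℂ) := hgc'.toSchwartzMap hg' with hφ
  have hφx : ∀ x, φ x = (g x : ℂ) := fun x => rfl
  have h1 := DFunLike.congr_fun (Lp.fourier_toTemperedDistribution_eq (hf2.toLp f)) φ
  rw [TemperedDistribution.fourier_apply, Lp.toTemperedDistribution_apply,
    Lp.toTemperedDistribution_apply] at h1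
  have h2 : ∫ x, (𝓕 φ) x • (hf2.toLp f) x = ∫ x, (𝓕 φ) x • f x := by
    refine integral_congr_ae ?_
    filter_upwards [hf2.coeFn_toLp] with x hx
    rw [hx]
  have h3 : ∫ x, (𝓕 φ) x • f x = ∫ x, φ x • 𝓕 f x := by
    rw [SchwartzMap.fourier_coe]
    have := VectorFourier.integral_fourierIntegral_smul_eq_flip (L := innerₗ E)
      (μ := volume) (ν := volume) Real.continuous_fourierChar continuous_inner φ.integrable hf
    rw [flip_innerₗ] at this
    exact this
  simp only [← coe_smul, ← hφx]
  rw [← h1, h2, h3]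

/-- Parseval's identity for the bilinear pairing. -/
theorem integral_mul_eq_integral_fourier_neg_mul {f g : E → ℂ} (hf : Integrable f)
    (hf2 : MemLp f 2) (hg : Integrable g) (hg2 : MemLp g 2) :
    ∫ x, f x * g x = ∫ t, 𝓕 f (-t) * 𝓕 g t := by
  have hc : Integrable fun x => conj (f x) :=
    (LinearIsometryEquiv.integrable_comp_iff conjLIE).2 hf
  have hc2 : MemLp (fun x => conj (f x)) 2 := hf2.star
  have key := Lp.inner_fourier_eq (hc2.toLp _) (hg2.toLp g)
  rw [L2.inner_def, L2.inner_def] at key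
  have h1 : ∫ x, f x * g x =
      ∫ x, inner ℂ ((hc2.toLp _) x) ((hg2.toLp g) x) := by
    refine integral_congr_ae ?_
    filter_upwards [hc2.coeFn_toLp, hg2.coeFn_toLp] with x hx hx'
    simp [hx, hx', mul_comm]
  rw [h1, ← key]
  refine integral_congr_ae ?_
  filter_upwards [fourier_toLp_ae_eq hc hc2, fourier_toLp_ae_eq hg hg2] with x hx hx'
  rw [hx, hx', RCLike.inner_apply, mul_comm]
  congr 1
  rw [Real.fourier_eq, Real.fourier_eq, ← integral_conj]
  congr 1
  ext v
  simp [Circle.smul_def, ← Circle.coe_inv_eq_conj, ← AddChar.map_neg_eq_inv]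

end Plancherel

section Mellin

open scoped FourierTransform

variable {k : ℕ}

theorem setIntegral_posSet_eq_integral_exp (f : (Fin k → ℝ) → ℂ) :
    ∫ y in posSet k, f y =
      ∫ x : Fin k → ℝ, ((∏ i, Real.exp (x i) : ℝ) : ℂ) * f (fun i => Real.exp (x i)) := by
  have himg : posSet k = (fun x : Fin k → ℝ => fun i => Real.exp (x i)) '' Set.univ := by
    ext y
    simp only [posSet, Set.mem_ofPred_eq, Set.image_univ, Set.mem_range]
    constructor
    · intro h
      exact ⟨fun i => Real.log (y i), funext fun i => Real.exp_log (h i)⟩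
    · rintro ⟨x, rfl⟩ j
      exact Real.exp_pos _
  have hderiv : ∀ x ∈ (Set.univ : Set (Fin k → ℝ)),
      HasFDerivWithinAt (fun x : Fin k → ℝ => fun i => Real.exp (x i))
        (ContinuousLinearMap.pi fun i =>
          ((ContinuousLinearMap.id ℝ ℝ).smulRight (Real.exp (x i))).comp
            (ContinuousLinearMap.proj i)) Set.univ x := by
    intro x _
    refine hasFDerivWithinAt_pi.2 fun i => ?_
    have h := (Real.hasDerivAt_exp (x i)).hasFDerivAt.comp x
      (ContinuousLinearMap.proj (R := ℝ) (φ := fun _ : Fin k => ℝ) i).hasFDerivAt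
    exact h.hasFDerivWithinAt
  have hinj : Set.InjOn (fun x : Fin k → ℝ => fun i => Real.exp (x i)) Set.univ := by
    intro x _ y _ h
    exact funext fun i => Real.exp_injective (congrFun h i)
  rw [himg, integral_image_eq_integral_abs_det_fderiv_smul volume MeasurableSet.univ hderiv hinj,
    Measure.restrict_univ]
  congr 1
  ext x
  rw [ContinuousLinearMap.det_pi]
  rw [abs_of_nonneg]
  · simp
  · simp only [ContinuousLinearMap.det, ContinuousLinearMap.coe_smulRight]
    refine Finset.prod_nonneg fun i _ => ?_
    rw [LinearMap.det_ring]
    simp [Real.exp_nonneg]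

/-- A function on the positive orthant is monomially bounded if it is dominated by a multiple of
every monomial with negative exponents. -/
def MonomialBounded (k : ℕ) (W : (Fin k → ℝ) → ℂ) : Prop :=
  ∀ τ : Fin k → ℝ, (∀ j, 0 < τ j) →
    ∃ C : ℝ, ∀ y ∈ posSet k, ‖W y‖ ≤ C * ∏ j, y j ^ (-τ j)

theorem MonomialBounded.norm_exp_le {W : (Fin k → ℝ) → ℂ} (hW : MonomialBounded k W)
    {σ : Fin k → ℂ} (hσ : ∀ j, 0 < (σ j).re) :
    ∃ C : ℝ, ∀ x : Fin k → ℝ,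
      ‖W (fun i => Real.exp (x i)) * ∏ i, cexp (σ i * x i)‖ ≤
        C * ∏ i, Real.exp (-((σ i).re / 2) * |x i|) := by
  have hpos : ∀ (e : Fin k → Bool) j,
      0 < (σ j).re + (if e j then (σ j).re / 2 else -((σ j).re / 2)) := by
    intro e j
    have := hσ j
    split_ifs <;> linarith
  choose C hC using fun e => hW _ (hpos e)
  refine ⟨∑ e, |C e|, fun x => ?_⟩
  set e : Fin k → Bool := fun j => decide (0 ≤ x j) with he
  have h1 := hC e (fun i => Real.exp (x i)) (fun j => Real.exp_pos _)
  rw [norm_mul, norm_prod]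
  have h2 : ∀ i, ‖cexp (σ i * x i)‖ = Real.exp ((σ i).re * x i) := by
    intro i
    rw [Complex.norm_exp]
    simp
  simp only [h2]
  have h3 : C e ≤ ∑ e, |C e| :=
    (le_abs_self _).trans
      (Finset.single_le_sum (f := fun e => |C e|) (fun _ _ => abs_nonneg _) (Finset.mem_univ e))
  calc _ ≤ (C e * ∏ j, Real.exp (x j) ^
          (-((σ j).re + (if e j then (σ j).re / 2 else -((σ j).re / 2))))) *
            ∏ i, Real.exp ((σ i).re * x i) := by
        gcongr
    _ = C e * ∏ i, Real.exp (-((σ i).re / 2) * |x i|) := by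
        rw [mul_assoc, ← Finset.prod_mul_distrib]
        congr 1
        refine Finset.prod_congr rfl fun i _ => ?_
        rw [← Real.exp_mul, ← Real.exp_add]
        congr 1
        by_cases hx : 0 ≤ x i
        · simp [he, hx, abs_of_nonneg]; ring
        · simp [he, hx, abs_of_neg (not_le.1 hx)]; ring
    _ ≤ _ := by gcongr

theorem integrable_exp_neg_mul_abs {δ : ℝ} (hδ : 0 < δ) :
    Integrable fun x : ℝ => Real.exp (-δ * |x|) := by
  rw [← integrableOn_univ, ← Set.Iic_union_Ioi (a := (0 : ℝ))]
  refine IntegrableOn.union ?_ ?_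
  · refine (integrableOn_exp_mul_Iic hδ 0).congr_fun (fun x hx => ?_) measurableSet_Iic
    simp [abs_of_nonpos (Set.mem_Iic.1 hx)]
  · refine (integrableOn_exp_mul_Ioi (neg_neg_of_pos hδ) 0).congr_fun (fun x hx => ?_)
      measurableSet_Ioi
    simp [abs_of_pos (Set.mem_Ioi.1 hx)]

theorem integrable_prod_exp_neg_mul_abs {δ : Fin k → ℝ} (hδ : ∀ i, 0 < δ i) :
    Integrable fun x : Fin k → ℝ => ∏ i, Real.exp (-δ i * |x i|) :=
  Integrable.fintype_prod (μ := fun _ => volume)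
    (f := fun i (x : ℝ) => Real.exp (-δ i * |x|)) fun i =>
    integrable_exp_neg_mul_abs (hδ i)

theorem MonomialBounded.integrable_memLp {W : (Fin k → ℝ) → ℂ} (hW : MonomialBounded k W)
    (hm : Measurable W) {σ : Fin k → ℂ} (hσ : ∀ j, 0 < (σ j).re) :
    Integrable (fun x : Fin k → ℝ => W (fun i => Real.exp (x i)) * ∏ i, cexp (σ i * x i)) ∧
    MemLp (fun x : Fin k → ℝ => W (fun i => Real.exp (x i)) * ∏ i, cexp (σ i * x i)) 2 := by
  obtain ⟨C, hC⟩ := hW.norm_exp_le hσ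
  have hmeas : Measurable
      (fun x : Fin k → ℝ => W (fun i => Real.exp (x i)) * ∏ i, cexp (σ i * x i)) := by
    refine (hm.comp (by fun_prop)).mul (by fun_prop)
  have hprod := (integrable_prod_exp_neg_mul_abs (k := k)
    (δ := fun i => (σ i).re / 2) fun i => by have := hσ i; positivity).const_mul C
  have hfun : Integrable
      (fun x : Fin k → ℝ => W (fun i => Real.exp (x i)) * ∏ i, cexp (σ i * x i)) :=
    hprod.mono' hmeas.aestronglyMeasurable (Filter.Eventually.of_forall hC)
  refine ⟨hfun, (memLp_two_iff_integrable_sq_norm hmeas.aestronglyMeasurable).2 ?_⟩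
  refine (hprod.const_mul C).mono' (hmeas.norm.pow_const 2).aestronglyMeasurable
    (Filter.Eventually.of_forall fun x => ?_)
  have h0 : 0 ≤ C * ∏ i, Real.exp (-((σ i).re / 2) * |x i|) := (norm_nonneg _).trans (hC x)
  have h1 : (0 : ℝ) ≤ ∏ i, Real.exp (-((σ i).re / 2) * |x i|) := by positivity
  have h2 : ∏ i, Real.exp (-((σ i).re / 2) * |x i|) ≤ 1 := by
    refine Finset.prod_le_one (fun _ _ => by positivity) fun i _ => ?_
    rw [Real.exp_le_one_iff]
    have := hσ i
    have := abs_nonneg (x i)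
    nlinarith [mul_nonneg (hσ i).le this]
  have hC0 : 0 ≤ C := by
    by_contra hneg
    have : 0 < ∏ i, Real.exp (-((σ i).re / 2) * |x i|) :=
      Finset.prod_pos fun _ _ => Real.exp_pos _
    nlinarith
  rw [Real.norm_of_nonneg (by positivity)]
  have h3 := pow_le_pow_left₀ (norm_nonneg _) (hC x) 2
  refine h3.trans ?_
  rw [sq]
  refine mul_le_mul_of_nonneg_right ?_ h0
  exact mul_le_of_le_one_right hC0 h2

theorem setIntegral_posSet_mul_cpow (W : (Fin k → ℝ) → ℂ) (σ : Fin k → ℂ) :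
    ∫ y in posSet k, W y * ∏ j, (y j : ℂ) ^ σ j / (y j : ℂ) =
      ∫ x : Fin k → ℝ, W (fun i => Real.exp (x i)) * ∏ i, cexp (σ i * x i) := by
  rw [setIntegral_posSet_eq_integral_exp]
  congr 1
  ext x
  rw [mul_left_comm, ofReal_prod, ← Finset.prod_mul_distrib]
  congr 1
  refine Finset.prod_congr rfl fun i _ => ?_
  have : (Real.exp (x i) : ℂ) ≠ 0 := by exact_mod_cast (Real.exp_pos _).ne'
  rw [mul_div_cancel₀ _ this, Complex.cpow_def_of_ne_zero this, ← Complex.ofReal_log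
    (Real.exp_pos _).le, Real.log_exp, mul_comm]

/-- The multiplicative convolution formula for Mellin transforms on the positive orthant. -/
theorem mellin_parseval {W W' : (Fin k → ℝ) → ℂ} (hW : MonomialBounded k W)
    (hW' : MonomialBounded k W') (hm : Measurable W) (hm' : Measurable W')
    {σ c : Fin k → ℂ} (hσ : ∀ j, 0 < (σ j).re) (hc : ∀ j, 0 < (c j).re) :
    ∫ y in posSet k, W y * W' y * ∏ j, (y j : ℂ) ^ (σ j + c j) / (y j : ℂ) =
      ((2 * Real.pi : ℂ) ^ k)⁻¹ * ∫ t : Fin k → ℝ,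
        (∫ y in posSet k, W y * ∏ j, (y j : ℂ) ^ (σ j - t j * I) / (y j : ℂ)) *
        ∫ y in posSet k, W' y * ∏ j, (y j : ℂ) ^ (c j + t j * I) / (y j : ℂ) := by
  set F : (Fin k → ℝ) → ℂ := fun x => W (fun i => Real.exp (x i)) * ∏ i, cexp (σ i * x i) with hF
  set G : (Fin k → ℝ) → ℂ := fun x => W' (fun i => Real.exp (x i)) * ∏ i, cexp (c i * x i) with hG
  have hvol := PiLp.volume_preserving_ofLp (Fin k)
  have hvol' := PiLp.volume_preserving_toLp (Fin k)
  have hemb := (MeasurableEquiv.toLp 2 (Fin k → ℝ)).symm.measurableEmbedding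
  have hemb' := (MeasurableEquiv.toLp 2 (Fin k → ℝ)).measurableEmbedding
  obtain ⟨hF1, hF2⟩ := hW.integrable_memLp hm hσ
  obtain ⟨hG1, hG2⟩ := hW'.integrable_memLp hm' hc
  have hFourier : ∀ (H : (Fin k → ℝ) → ℂ) (t : Fin k → ℝ),
      𝓕 (fun x : EuclideanSpace ℝ (Fin k) => H x.ofLp) ((2 * Real.pi)⁻¹ • WithLp.toLp 2 t) =
        ∫ x, H x * ∏ i, cexp (-(t i * I * x i)) := by
    intro H t
    rw [Real.fourier_eq',
      ← hvol.integral_comp hemb (fun x => H x * ∏ i, cexp (-(t i * I * x i)))]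
    congr 1
    ext x
    rw [smul_eq_mul, mul_comm, ← Complex.exp_sum]
    congr 2
    rw [inner_smul_right, PiLp.inner_apply]
    push_cast
    rw [← mul_assoc, Finset.mul_sum, Finset.sum_mul]
    refine Finset.sum_congr rfl fun i _ => ?_
    have : (Real.pi : ℂ) ≠ 0 := by exact_mod_cast Real.pi_ne_zero
    simp
    field_simp
  have hneg : ∀ t : Fin k → ℝ,
      ∫ y in posSet k, W y * ∏ j, (y j : ℂ) ^ (σ j - t j * I) / (y j : ℂ) =
      𝓕 (fun x : EuclideanSpace ℝ (Fin k) => F x.ofLp) ((2 * Real.pi)⁻¹ • WithLp.toLp 2 t) := by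
    intro t
    rw [setIntegral_posSet_mul_cpow, hFourier]
    congr 1
    ext x
    rw [hF, mul_assoc, ← Finset.prod_mul_distrib]
    congr 1
    refine Finset.prod_congr rfl fun i _ => ?_
    rw [← Complex.exp_add]
    ring_nf
  have hpos : ∀ t : Fin k → ℝ,
      ∫ y in posSet k, W' y * ∏ j, (y j : ℂ) ^ (c j + t j * I) / (y j : ℂ) =
      𝓕 (fun x : EuclideanSpace ℝ (Fin k) => G x.ofLp)
        (-((2 * Real.pi)⁻¹ • WithLp.toLp 2 t)) := by
    intro t
    rw [setIntegral_posSet_mul_cpow, ← smul_neg, ← WithLp.toLp_neg, hFourier]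
    congr 1
    ext x
    rw [hG, mul_assoc, ← Finset.prod_mul_distrib]
    congr 1
    refine Finset.prod_congr rfl fun i _ => ?_
    rw [← Complex.exp_add]
    simp only [Pi.neg_apply, ofReal_neg]
    ring_nf
  simp only [hneg, hpos]
  rw [hvol'.integral_comp hemb' (fun t =>
    𝓕 (fun x : EuclideanSpace ℝ (Fin k) => F x.ofLp) ((2 * Real.pi)⁻¹ • t) *
      𝓕 (fun x : EuclideanSpace ℝ (Fin k) => G x.ofLp) (-((2 * Real.pi)⁻¹ • t))),
    Measure.integral_comp_smul volume (fun t =>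
    𝓕 (fun x : EuclideanSpace ℝ (Fin k) => F x.ofLp) t *
      𝓕 (fun x : EuclideanSpace ℝ (Fin k) => G x.ofLp) (-t))]
  simp only [mul_comm (𝓕 (fun x : EuclideanSpace ℝ (Fin k) => F x.ofLp) _)]
  rw [← integral_mul_eq_integral_fourier_neg_mul
    (f := fun x : EuclideanSpace ℝ (Fin k) => G x.ofLp)
    (g := fun x : EuclideanSpace ℝ (Fin k) => F x.ofLp)
    ((hvol.integrable_comp_emb hemb).2 hG1) (hG2.comp_measurePreserving hvol)
    ((hvol.integrable_comp_emb hemb).2 hF1) (hF2.comp_measurePreserving hvol),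
    hvol.integral_comp hemb (fun x => G x * F x), setIntegral_posSet_mul_cpow
      (fun y => W y * W' y)]
  have hpi : (2 * Real.pi : ℂ) ^ k ≠ 0 := by
    have : (Real.pi : ℂ) ≠ 0 := by exact_mod_cast Real.pi_ne_zero
    exact pow_ne_zero _ (mul_ne_zero two_ne_zero this)
  rw [finrank_euclideanSpace, Fintype.card_fin, abs_of_nonneg (by positivity), real_smul]
  push_cast
  rw [inv_pow, inv_inv, ← mul_assoc, inv_mul_cancel₀ hpi, one_mul]
  congr 1
  ext x
  simp only [hF, hG, add_mul, Complex.exp_add, Finset.prod_mul_distrib]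
  ring

end Mellin

section Whittaker

theorem measurable_extR {k : ℕ} (j : ℕ) : Measurable fun t : Fin k → ℝ => extR t j := by
  unfold extR
  split_ifs <;> fun_prop

theorem extR_coe {k : ℕ} (t : Fin k → ℝ) (j : Fin k) : extR t j = t j := by
  simp [extR]

theorem extR_pos {k : ℕ} {t : Fin k → ℝ} (ht : t ∈ posSet k) (j : ℕ) : 0 < extR t j := by
  unfold extR
  split_ifs with h
  · exact ht _
  · exact one_pos

theorem prod_range_extR {k : ℕ} {M : Type*} [CommMonoid M] (t : Fin k → ℝ) (f : ℕ → ℝ → M) :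
    ∏ j ∈ Finset.range k, f j (extR t j) = ∏ j : Fin k, f j (t j) := by
  rw [Finset.prod_range]
  simp only [extR_coe]

theorem measurable_BesselK (ν : ℂ) : Measurable (BesselK ν) := by
  refine Measurable.const_mul (StronglyMeasurable.measurable ?_) _
  refine StronglyMeasurable.integral_prod_right (Measurable.stronglyMeasurable ?_)
  unfold Function.uncurry
  fun_prop

theorem measurable_WhittAr (n : ℕ) (a : ℕ → ℂ) : Measurable (WhittAr n a) := by
  induction n using Nat.strong_induction_on generalizing a with
  | _ n ih =>
    match n, ih with
    | 0, _ => exact measurable_const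
    | 1, _ => exact measurable_const
    | 2, _ =>
      have := measurable_BesselK ((a 0 - a 1) / 2)
      change Measurable fun y => WhittAr 2 a y
      unfold WhittAr
      fun_prop
    | n + 3, ih =>
      have h := ih (n + 2) (by omega) (tildeA (n + 3) a)
      have hext : ∀ j, Measurable fun p : (ℕ → ℝ) × (Fin (n + 2) → ℝ) => extR p.2 j :=
        fun j => (measurable_extR j).comp measurable_snd
      change Measurable fun y => WhittAr (n + 3) a y
      unfold WhittAr
      refine StronglyMeasurable.measurable
        (StronglyMeasurable.integral_prod_right (Measurable.stronglyMeasurable ?_))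
      unfold Function.uncurry
      refine ((Measurable.mul ?_ ?_).mul ?_).mul ?_
      · exact h.comp (measurable_pi_lambda _ fun j => by fun_prop)
      · fun_prop
      · fun_prop
      · fun_prop

theorem WhittAr_congr (n : ℕ) (a : ℕ → ℂ) {y y' : ℕ → ℝ} (h : ∀ j < n - 1, y j = y' j) :
    WhittAr n a y = WhittAr n a y' := by
  induction n using Nat.strong_induction_on generalizing a y y' with
  | _ n ih =>
    match n, ih with
    | 0, _ => rfl
    | 1, _ => rfl
    | 2, _ => simp only [WhittAr, h 0 (by norm_num)]
    | n + 3, ih =>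
      unfold WhittAr
      congr 1
      ext t
      congr 3
      · refine ih (n + 2) (by omega) _ fun j hj => ?_
        rw [h (j + 1) (by omega)]
      · refine Finset.prod_congr rfl fun j hj => ?_
        rw [h j (by simpa using hj)]

theorem exp_neg_le_mul_rpow_neg {b x : ℝ} (hb : 0 < b) (hx : 0 < x) :
    Real.exp (-x) ≤ b ^ b * x ^ (-b) := by
  rw [Real.rpow_def_of_pos hb, Real.rpow_def_of_pos hx, ← Real.exp_add, Real.exp_le_exp]
  have h := Real.log_le_sub_one_of_pos (div_pos hx hb)
  rw [Real.log_div hx.ne' hb.ne'] at h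
  have h2 := mul_le_mul_of_nonneg_left h hb.le
  have h3 : b * (x / b - 1) = x - b := by field_simp
  linarith

theorem integrableOn_min_rpow {b : ℝ} (hb : 0 < b) :
    IntegrableOn (fun t : ℝ => min (t ^ (b - 1)) (t ^ (-b - 1))) (Set.Ioi 0) := by
  have hm : Measurable fun t : ℝ => min (t ^ (b - 1)) (t ^ (-b - 1)) := by fun_prop
  rw [← Set.Ioc_union_Ioi_eq_Ioi zero_le_one]
  refine IntegrableOn.union ?_ ?_
  · have h : IntegrableOn (fun t : ℝ => t ^ (b - 1)) (Set.Ioc 0 1) :=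
      (intervalIntegrable_iff_integrableOn_Ioc_of_le zero_le_one).1
        (intervalIntegral.intervalIntegrable_rpow' (by linarith))
    refine h.mono' hm.aestronglyMeasurable
      ((ae_restrict_iff' measurableSet_Ioc).2 (Filter.Eventually.of_forall fun t ht => ?_))
    have := ht.1.le
    rw [Real.norm_of_nonneg (by positivity)]
    exact min_le_left _ _
  · have h : IntegrableOn (fun t : ℝ => t ^ (-b - 1)) (Set.Ioi 1) :=
      integrableOn_Ioi_rpow_of_lt (by linarith) one_pos
    refine h.mono' hm.aestronglyMeasurable
      ((ae_restrict_iff' measurableSet_Ioi).2 (Filter.Eventually.of_forall fun t ht => ?_))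
    have : (0 : ℝ) ≤ t := zero_le_one.trans (Set.mem_Ioi.1 ht).le
    rw [Real.norm_of_nonneg (by positivity)]
    exact min_le_right _ _

theorem integrableOn_exp_neg_inv_mul_rpow {b : ℝ} (hb : 0 < b) :
    IntegrableOn (fun t : ℝ => Real.exp (-(1 / t)) * t ^ (-b) * t⁻¹) (Set.Ioi 0) := by
  have hm : Measurable fun t : ℝ => Real.exp (-(1 / t)) * t ^ (-b) * t⁻¹ := by fun_prop
  refine ((integrableOn_min_rpow hb).const_mul (1 + (2 * b) ^ (2 * b))).mono'
    hm.aestronglyMeasurable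
    ((ae_restrict_iff' measurableSet_Ioi).2 (Filter.Eventually.of_forall fun t ht => ?_))
  have ht : 0 < t := ht
  have hC : 0 ≤ (2 * b) ^ (2 * b) := by positivity
  rw [Real.norm_of_nonneg (by positivity), mul_min_of_nonneg _ _ (by positivity), mul_assoc,
    ← Real.rpow_neg_one, ← Real.rpow_add ht]
  refine le_min ?_ ?_
  · have h := exp_neg_le_mul_rpow_neg (b := 2 * b) (x := 1 / t) (by positivity) (by positivity)
    rw [one_div, Real.inv_rpow ht.le, ← Real.rpow_neg ht.le, neg_neg] at h
    calc _ ≤ (2 * b) ^ (2 * b) * t ^ (2 * b) * t ^ (-b + -1) := by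
          rw [one_div]; gcongr
      _ = (2 * b) ^ (2 * b) * t ^ (b - 1) := by
          rw [mul_assoc, ← Real.rpow_add ht]; ring_nf
      _ ≤ _ := by gcongr; linarith
  · have h1 : Real.exp (-(1 / t)) ≤ 1 := Real.exp_le_one_iff.2 (by simp [ht.le])
    rw [← sub_eq_add_neg]
    gcongr
    linarith

theorem norm_ofReal_cpow_of_re_eq_zero {x : ℝ} (hx : 0 < x) {z : ℂ} (hz : z.re = 0) :
    ‖(x : ℂ) ^ z‖ = 1 := by
  rw [norm_cpow_eq_rpow_re_of_pos hx, hz, Real.rpow_zero]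

theorem norm_BesselK_le {ν : ℂ} (hν : ν.re = 0) {b : ℝ} (hb : 0 < b) :
    ∃ C : ℝ, ∀ y : ℝ, 0 < y → ‖BesselK ν y‖ ≤ C * y ^ (-b) := by
  refine ⟨1 / 2 * (b ^ b * (1 / 2) ^ (-b)) *
    ∫ t in Set.Ioi (0 : ℝ), min (t ^ (b - 1)) (t ^ (-b - 1)), fun y hy => ?_⟩
  unfold BesselK
  rw [norm_mul]
  have h : ‖∫ t in Set.Ioi (0 : ℝ),
      cexp (-((y : ℂ) / 2) * ((t : ℂ) + 1 / (t : ℂ))) * (t : ℂ) ^ ν / (t : ℂ)‖ ≤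
      ∫ t in Set.Ioi (0 : ℝ),
        (b ^ b * (y / 2) ^ (-b)) * min (t ^ (b - 1)) (t ^ (-b - 1)) := by
    refine norm_integral_le_of_norm_le ((integrableOn_min_rpow hb).const_mul _)
      ((ae_restrict_iff' measurableSet_Ioi).2 (Filter.Eventually.of_forall fun t ht => ?_))
    have ht : 0 < t := ht
    have he : cexp (-((y : ℂ) / 2) * ((t : ℂ) + 1 / (t : ℂ))) =
        (Real.exp (-(y / 2 * t) + -(y / 2 * t⁻¹)) : ℂ) := by
      push_cast; congr 1; ring
    rw [norm_div, norm_mul, norm_ofReal_cpow_of_re_eq_zero ht hν, he, norm_real, norm_real,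
      Real.norm_of_nonneg (Real.exp_pos _).le, Real.norm_of_nonneg ht.le, mul_one,
      mul_min_of_nonneg _ _ (by positivity), div_eq_mul_inv]
    have hy2 : 0 < y / 2 := by positivity
    have key : ∀ r : ℝ, 0 < r → Real.exp (-(y / 2 * t) + -(y / 2 * t⁻¹)) ≤
        Real.exp (-(y / 2 * r)) →
        Real.exp (-(y / 2 * t) + -(y / 2 * t⁻¹)) * t⁻¹ ≤
          b ^ b * (y / 2) ^ (-b) * (r ^ (-b) * t⁻¹) := by
      intro r hr h
      rw [← mul_assoc, mul_assoc (b ^ b), ← Real.mul_rpow hy2.le hr.le]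
      gcongr
      exact h.trans (exp_neg_le_mul_rpow_neg hb (by positivity))
    refine le_min ?_ ?_
    · refine (key t⁻¹ (by positivity) (Real.exp_le_exp.2 ?_)).trans_eq ?_
      · have : 0 < y / 2 * t := by positivity
        linarith
      · rw [Real.inv_rpow ht.le, ← Real.rpow_neg ht.le, neg_neg, ← Real.rpow_neg_one,
          ← Real.rpow_add ht]
        ring_nf
    · refine (key t ht (Real.exp_le_exp.2 ?_)).trans_eq ?_
      · have : 0 < y / 2 * t⁻¹ := by positivity
        linarith
      · rw [← Real.rpow_neg_one, ← Real.rpow_add ht]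
        ring_nf
  rw [integral_const_mul] at h
  rw [show ‖(1 / 2 : ℂ)‖ = 1 / 2 by norm_num]
  refine (mul_le_mul_of_nonneg_left h (by norm_num)).trans_eq ?_
  rw [div_eq_mul_one_div y, Real.mul_rpow hy.le (by norm_num)]
  ring

theorem integrableOn_posSet_prod {k : ℕ} {f : Fin k → ℝ → ℝ}
    (hf : ∀ i, IntegrableOn (f i) (Set.Ioi 0)) :
    IntegrableOn (fun t : Fin k → ℝ => ∏ i, f i (t i)) (posSet k) := by
  have hset : posSet k = Set.univ.pi fun _ => Set.Ioi (0 : ℝ) := by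
    ext t; simp [posSet]
  rw [IntegrableOn, hset, volume_pi, Measure.restrict_pi_pi]
  exact Integrable.fintype_prod (μ := fun _ => volume.restrict (Set.Ioi 0)) hf

theorem measurableSet_posSet (k : ℕ) : MeasurableSet (posSet k) := by
  have hset : posSet k = Set.univ.pi fun _ => Set.Ioi (0 : ℝ) := by
    ext t; simp [posSet]
  rw [hset]
  exact MeasurableSet.univ_pi fun _ => measurableSet_Ioi

theorem tildeA_re {n : ℕ} {a : ℕ → ℂ} (ha : ∀ j < n + 1, (a j).re = 0) {j : ℕ} (hj : j < n) :
    (tildeA (n + 1) a j).re = 0 := by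
  have h : ((n + 1 : ℕ) : ℂ) - 1 = ((n : ℝ) : ℂ) := by push_cast; ring
  rw [tildeA, h, add_re, div_ofReal_re, ha _ (by omega), ha 0 (by omega)]
  simp

theorem sumA_re {n : ℕ} {a : ℕ → ℂ} (ha : ∀ j < n, (a j).re = 0) : (sumA n a).re = 0 := by
  rw [sumA, re_sum]
  exact Finset.sum_eq_zero fun j hj => ha j (Finset.mem_range.1 hj)

theorem prod_range_rpow_telescope (m : ℕ) {y T : ℕ → ℝ} (hy : ∀ j < m + 2, 0 < y j)
    (hT : ∀ j, 0 < T j) (ε : ℝ) :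
    ∏ j ∈ Finset.range (m + 1), (y (j + 1) * Real.sqrt (T (j + 1) / T j)) ^ (-ε) =
      ∏ j ∈ Finset.range (m + 2), y j ^ (-ε + 2 * if j = 0 then ε / 2 else 0) *
        T j ^ ((if j = 0 then ε / 2 else 0) - if j = m + 1 then ε / 2 else 0) := by
  have h1 : ∀ j ∈ Finset.range (m + 1),
      (y (j + 1) * Real.sqrt (T (j + 1) / T j)) ^ (-ε) =
        y (j + 1) ^ (-ε) * T (j + 1) ^ (-(ε / 2)) * T j ^ (ε / 2) := by
    intro j hj
    have hyj := hy (j + 1) (by have := Finset.mem_range.1 hj; omega)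
    rw [Real.mul_rpow hyj.le (Real.sqrt_nonneg _), Real.sqrt_eq_rpow,
      ← Real.rpow_mul (div_pos (hT _) (hT _)).le, Real.div_rpow (hT _).le (hT _).le,
      div_eq_mul_inv, ← Real.rpow_neg (hT _).le]
    ring_nf
  have h2 : ∏ j ∈ Finset.range (m + 1), y (j + 1) ^ (-ε) * T (j + 1) ^ (-(ε / 2)) =
      ∏ j ∈ Finset.range (m + 2), y j ^ (-ε + 2 * if j = 0 then ε / 2 else 0) *
        T j ^ (-(ε / 2) + if j = 0 then ε / 2 else 0) := by
    rw [Finset.prod_range_succ' _ (m + 1)]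
    simp [mul_div_cancel₀]
  have h3 : ∏ j ∈ Finset.range (m + 1), T j ^ (ε / 2) =
      ∏ j ∈ Finset.range (m + 2), T j ^ (ε / 2 - if j = m + 1 then ε / 2 else 0) := by
    rw [Finset.prod_range_succ _ (m + 1)]
    simp only [if_true, sub_self, Real.rpow_zero, mul_one]
    refine Finset.prod_congr rfl fun j hj => ?_
    rw [if_neg (Finset.mem_range.1 hj).ne, sub_zero]
  rw [Finset.prod_congr rfl h1, Finset.prod_mul_distrib, h2, h3, ← Finset.prod_mul_distrib]
  refine Finset.prod_congr rfl fun j _ => ?_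
  rw [mul_assoc, ← Real.rpow_add (hT j)]
  ring_nf

theorem exp_neg_sq_mul_le {β y T : ℝ} (hβ : 0 < β) (hy : 0 < y) (hT : 0 < T) :
    Real.exp (-(Real.pi * y) ^ 2 * T) ≤
      (β ^ β * Real.pi ^ (-(2 * β))) * (y ^ (-(2 * β)) * T ^ (-β)) := by
  have hpi := Real.pi_pos
  have h := exp_neg_le_mul_rpow_neg hβ (x := (Real.pi * y) ^ 2 * T) (by positivity)
  rw [neg_mul]
  refine h.trans_eq ?_
  rw [Real.mul_rpow (by positivity) hT.le, ← Real.rpow_natCast, ← Real.rpow_mul (by positivity),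
    Real.mul_rpow hpi.le hy.le]
  push_cast
  rw [mul_neg]
  ring

theorem exists_norm_WhittAr_le (m : ℕ) (a : ℕ → ℂ) (ha : ∀ j < m + 2, (a j).re = 0)
    (τ : ℕ → ℝ) (hτ : ∀ j, 0 < τ j) :
    ∃ C : ℝ, 0 ≤ C ∧ ∀ y : ℕ → ℝ, (∀ j < m + 1, 0 < y j) →
      ‖WhittAr (m + 2) a y‖ ≤ C * ∏ j ∈ Finset.range (m + 1), y j ^ (-τ j) := by
  induction m generalizing a τ with
  | zero =>
    obtain ⟨C, hC⟩ := norm_BesselK_le (ν := (a 0 - a 1) / 2) (by simp [ha]) (hτ 0)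
    refine ⟨|2 * (C * (2 * Real.pi) ^ (-τ 0))|, abs_nonneg _, fun y hy => ?_⟩
    have hy0 := hy 0 (by norm_num)
    have hpi := Real.pi_pos
    have h := hC (2 * Real.pi * y 0) (by positivity)
    rw [Real.mul_rpow (by positivity) hy0.le] at h
    simp only [WhittAr, zero_add, Finset.range_one, Finset.prod_singleton]
    rw [norm_mul, norm_mul, norm_ofReal_cpow_of_re_eq_zero hy0 (by simp [ha])]
    calc _ ≤ 2 * (C * (2 * Real.pi) ^ (-τ 0)) * y 0 ^ (-τ 0) := by
          rw [Complex.norm_two]; linarith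
      _ ≤ _ := by
          gcongr
          exact le_abs_self _
  | succ m ih =>
    obtain ⟨ε, hε, hετ⟩ : ∃ ε : ℝ, 0 < ε ∧ ∀ j < m + 2, ε < τ j := by
      have hne : (Finset.range (m + 2)).Nonempty := ⟨0, by simp⟩
      have hpos : 0 < (Finset.range (m + 2)).inf' hne τ :=
        (Finset.lt_inf'_iff hne).2 fun j _ => hτ j
      refine ⟨(Finset.range (m + 2)).inf' hne τ / 2, by linarith, fun j hj => ?_⟩
      have := Finset.inf'_le τ (Finset.mem_range.2 hj)
      linarith
    obtain ⟨C, hC0, hC⟩ := ih (tildeA (m + 3) a) (fun j hj => tildeA_re ha hj) (fun _ => ε)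
      fun _ => hε
    set d₀ : ℕ → ℝ := fun j => if j = 0 then ε / 2 else 0 with hd₀
    set d₁ : ℕ → ℝ := fun j => if j = m + 1 then ε / 2 else 0 with hd₁
    have hd₀0 : ∀ j, 0 ≤ d₀ j := fun j => by simp only [hd₀]; split_ifs <;> linarith
    have hd₁0 : ∀ j, 0 ≤ d₁ j := fun j => by simp only [hd₁]; split_ifs <;> linarith
    set β : ℕ → ℝ := fun j => (τ j - ε) / 2 + d₀ j with hβ
    set γ : ℕ → ℝ := fun j => (τ j - ε) / 2 + d₁ j with hγ
    have hβ0 : ∀ j < m + 2, 0 < β j := fun j hj => by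
      have := hετ j hj; have := hd₀0 j; simp only [hβ]; linarith
    have hγ0 : ∀ j < m + 2, 0 < γ j := fun j hj => by
      have := hετ j hj; have := hd₁0 j; simp only [hγ]; linarith
    set D : ℕ → ℝ := fun j => β j ^ β j * Real.pi ^ (-(2 * β j)) with hD
    have hpi := Real.pi_pos
    have hD0 : ∀ j ∈ Finset.range (m + 2), 0 ≤ D j := fun j hj => by
      have := hβ0 j (Finset.mem_range.1 hj); positivity
    set G : (Fin (m + 2) → ℝ) → ℝ := fun t =>
      ∏ j : Fin (m + 2), (Real.exp (-(1 / t j)) * t j ^ (-γ j) * (t j)⁻¹) with hG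
    have hGint : IntegrableOn G (posSet (m + 2)) :=
      integrableOn_posSet_prod (f := fun (j : Fin (m + 2)) t =>
        Real.exp (-(1 / t)) * t ^ (-γ j) * t⁻¹)
        fun i => integrableOn_exp_neg_inv_mul_rpow (hγ0 i i.2)
    have hGI : 0 ≤ ∫ t in posSet (m + 2), G t :=
      setIntegral_nonneg (measurableSet_posSet _) fun t ht =>
        Finset.prod_nonneg fun j _ => by have : 0 < t j := ht j; positivity
    refine ⟨(C * ∏ j ∈ Finset.range (m + 2), D j) * ∫ t in posSet (m + 2), G t,
      mul_nonneg (mul_nonneg hC0 (Finset.prod_nonneg hD0)) hGI, fun y hy => ?_⟩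
    have hbound : ‖WhittAr (m + 3) a y‖ ≤ ∫ t in posSet (m + 2),
        ((C * ∏ j ∈ Finset.range (m + 2), D j) *
          ∏ j ∈ Finset.range (m + 2), y j ^ (-τ j)) * G t := by
      unfold WhittAr
      refine norm_integral_le_of_norm_le (hGint.const_mul _)
        ((ae_restrict_iff' (measurableSet_posSet _)).2
          (Filter.Eventually.of_forall fun t ht => ?_))
      have hT := extR_pos ht
      set T : ℕ → ℝ := extR t with hTdef
      have hW := hC (fun j => y (j + 1) * Real.sqrt (T (j + 1) / T j)) fun j hj =>
        mul_pos (hy _ (by omega)) (Real.sqrt_pos.2 (div_pos (hT _) (hT _)))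
      rw [prod_range_rpow_telescope m hy hT ε] at hW
      have hsum : (-(sumA (m + 3) a) / 2).re = 0 := by
        have := sumA_re ha
        simp [this]
      rw [norm_mul, norm_mul, norm_mul, norm_prod, norm_inv, norm_prod,
        norm_ofReal_cpow_of_re_eq_zero (mul_pos hpi (hT _)) hsum, mul_one]
      have hfac : ∀ j ∈ Finset.range (m + 2),
          ‖cexp (((-(Real.pi * y j) ^ 2 * T j - 1 / T j : ℝ) : ℂ)) *
              ((Real.pi * y j : ℝ) : ℂ) ^ ((((m + 2 - j : ℕ) : ℂ) * a 0) / ((m + 2 : ℕ) : ℂ)) *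
              ((T j : ℝ) : ℂ) ^ ((((m + 3 : ℕ) : ℂ) * a 0) / (2 * ((m + 2 : ℕ) : ℂ)))‖ =
            Real.exp (-(Real.pi * y j) ^ 2 * T j) * Real.exp (-(1 / T j)) := by
        intro j hj
        have h0 : (a 0).re = 0 := ha 0 (by omega)
        have hre : ∀ p q : ℝ, ((p : ℂ) * a 0 / (q : ℂ)).re = 0 := fun p q => by
          rw [div_ofReal_re, re_ofReal_mul, h0]; simp
        have e1 := hre ((m + 2 - j : ℕ) : ℝ) ((m + 2 : ℕ) : ℝ)
        have e2 := hre ((m + 3 : ℕ) : ℝ) (2 * ((m + 2 : ℕ) : ℝ))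
        simp only [ofReal_mul, ofReal_natCast, ofReal_ofNat] at e1 e2
        rw [norm_mul, norm_mul,
          norm_ofReal_cpow_of_re_eq_zero (mul_pos hpi (hy j (Finset.mem_range.1 hj))) e1,
          norm_ofReal_cpow_of_re_eq_zero (hT j) e2, ← Real.exp_add, mul_one, mul_one,
          Complex.norm_exp_ofReal, sub_eq_add_neg]
      rw [Finset.prod_congr rfl hfac]
      have hinv : (∏ j ∈ Finset.range (m + 2), ‖(T j : ℂ)‖)⁻¹ =
          ∏ j ∈ Finset.range (m + 2), (T j)⁻¹ := by
        rw [← Finset.prod_inv_distrib]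
        refine Finset.prod_congr rfl fun j _ => ?_
        rw [norm_real, Real.norm_of_nonneg (hT j).le]
      have hGT : G t = ∏ j ∈ Finset.range (m + 2),
          (Real.exp (-(1 / T j)) * T j ^ (-γ j) * (T j)⁻¹) :=
        (prod_range_extR t fun j x => Real.exp (-(1 / x)) * x ^ (-γ j) * x⁻¹).symm
      rw [hinv, hGT]
      calc _ ≤ (C * ∏ j ∈ Finset.range (m + 2), y j ^ (-ε + 2 * d₀ j) * T j ^ (d₀ j - d₁ j)) *
            (∏ j ∈ Finset.range (m + 2),
              Real.exp (-(Real.pi * y j) ^ 2 * T j) * Real.exp (-(1 / T j))) *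
            ∏ j ∈ Finset.range (m + 2), (T j)⁻¹ := by
            gcongr
            · exact Finset.prod_nonneg fun j _ => inv_nonneg.2 (hT j).le
        _ = C * ∏ j ∈ Finset.range (m + 2), (y j ^ (-ε + 2 * d₀ j) * T j ^ (d₀ j - d₁ j) *
              (Real.exp (-(Real.pi * y j) ^ 2 * T j) * Real.exp (-(1 / T j))) * (T j)⁻¹) := by
            simp only [Finset.prod_mul_distrib]
            ring
        _ ≤ C * ∏ j ∈ Finset.range (m + 2), (D j * y j ^ (-τ j) *
              (Real.exp (-(1 / T j)) * T j ^ (-γ j) * (T j)⁻¹)) := by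
            refine mul_le_mul_of_nonneg_left (Finset.prod_le_prod (fun j hj => ?_)
              fun j hj => ?_) hC0
            · have := hy j (Finset.mem_range.1 hj)
              have := hT j
              positivity
            · have hyj := hy j (Finset.mem_range.1 hj)
              have hTj := hT j
              have h := exp_neg_sq_mul_le (hβ0 j (Finset.mem_range.1 hj)) hyj hTj
              calc _ ≤ y j ^ (-ε + 2 * d₀ j) * T j ^ (d₀ j - d₁ j) *
                    (D j * (y j ^ (-(2 * β j)) * T j ^ (-β j)) * Real.exp (-(1 / T j))) *
                      (T j)⁻¹ := by gcongr
                _ = D j * (y j ^ (-ε + 2 * d₀ j) * y j ^ (-(2 * β j))) *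
                    (Real.exp (-(1 / T j)) * (T j ^ (d₀ j - d₁ j) * T j ^ (-β j)) *
                      (T j)⁻¹) := by ring
                _ = _ := by
                    rw [← Real.rpow_add hyj, ← Real.rpow_add hTj]
                    simp only [hβ, hγ]
                    ring_nf
        _ = _ := by
            rw [Finset.prod_mul_distrib, Finset.prod_mul_distrib]
            ring
    rw [integral_const_mul] at hbound
    refine hbound.trans_eq ?_
    ring

theorem monomialBounded_WhittAr {n : ℕ} (hn : 2 ≤ n) {a : ℕ → ℂ} (ha : ∀ j < n, (a j).re = 0) :
    MonomialBounded (n - 1) fun y => WhittAr n a (extR y) := by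
  obtain ⟨m, rfl⟩ := Nat.exists_eq_add_of_le' hn
  intro τ hτ
  obtain ⟨C, -, hC⟩ := exists_norm_WhittAr_le m a ha (extR τ) (extR_pos hτ)
  refine ⟨C, fun y hy => (hC (extR y) fun j _ => extR_pos hy j).trans_eq ?_⟩
  change C * ∏ j ∈ Finset.range (m + 2 - 1), _ = _
  rw [Finset.prod_range]
  simp only [extR_coe]

end Whittaker

section Zeta

theorem two_mul_integral_exp_neg_sq_mul_cpow {w : ℂ} (hw : 0 < w.re) :
    2 * ∫ u in Set.Ioi (0 : ℝ), cexp ((-(Real.pi * u ^ 2) : ℝ) : ℂ) * ((u : ℂ) ^ w / (u : ℂ)) =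
      GammaR w := by
  have h1 := integral_comp_rpow_Ioi_of_pos
    (g := fun v : ℝ => (v : ℂ) ^ (w / 2 - 1) * cexp (-((Real.pi : ℂ) * v))) (p := 2) two_pos
  have hw2 : 0 < (w / 2).re := by
    rw [show (2 : ℂ) = ((2 : ℝ) : ℂ) by norm_num, div_ofReal_re]
    positivity
  have h2 := integral_cpow_mul_exp_neg_mul_Ioi hw2 Real.pi_pos
  rw [h2] at h1
  rw [GammaR, ← integral_const_mul]
  have h3 : (1 / (Real.pi : ℂ)) ^ (w / 2) = (Real.pi : ℂ) ^ (-w / 2) := by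
    rw [one_div, inv_cpow _ _ (by
      rw [arg_ofReal_of_nonneg Real.pi_pos.le]; exact Real.pi_pos.ne), neg_div, cpow_neg]
  rw [← h3, ← h1]
  refine setIntegral_congr_fun measurableSet_Ioi fun u hu => ?_
  have hu : 0 < u := hu
  have hu' : (u : ℂ) ≠ 0 := by exact_mod_cast hu.ne'
  have h4 : ((u ^ (2 : ℝ) : ℝ) : ℂ) ^ (w / 2 - 1) = (u : ℂ) ^ w / (u : ℂ) ^ 2 := by
    rw [show (u : ℂ) ^ 2 = (u : ℂ) ^ (2 : ℂ) by norm_cast, ← cpow_sub _ _ hu',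
      Real.rpow_two, ofReal_pow, ← ofReal_pow, sq, ofReal_mul,
      mul_cpow_ofReal_nonneg hu.le hu.le, ← cpow_add _ _ hu']
    ring_nf
  simp only [h4, real_smul]
  rw [show (2 : ℝ) - 1 = 1 by norm_num, Real.rpow_one, Real.rpow_two]
  push_cast
  field_simp

theorem integral_posSet_succ (k : ℕ) (f : ℝ → ℂ) (g : (Fin k → ℝ) → ℂ) :
    ∫ y in posSet (k + 1), f (y (Fin.last k)) * g (fun j => y j.castSucc) =
      (∫ u in Set.Ioi (0 : ℝ), f u) * ∫ y in posSet k, g y := by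
  have hmp := volume_preserving_piFinSuccAbove (fun _ : Fin (k + 1) => ℝ) (Fin.last k)
  have hset : posSet (k + 1) =
      MeasurableEquiv.piFinSuccAbove (fun _ : Fin (k + 1) => ℝ) (Fin.last k) ⁻¹'
        (Set.Ioi 0 ×ˢ posSet k) := by
    ext y
    simp only [posSet, Set.mem_ofPred_eq, Set.mem_preimage, Set.mem_prod, Set.mem_Ioi,
      MeasurableEquiv.piFinSuccAbove_apply, Fin.forall_fin_succ']
    simp only [and_comm, Fin.insertNthEquiv_symm_apply, Fin.removeNth_last]
    exact and_congr_right fun _ => Iff.rfl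
  have h := hmp.setIntegral_preimage_emb
    (MeasurableEquiv.piFinSuccAbove (fun _ : Fin (k + 1) => ℝ) (Fin.last k)).measurableEmbedding
    (fun p => f p.1 * g p.2) (Set.Ioi 0 ×ˢ posSet k)
  rw [← hset, Measure.volume_eq_prod, setIntegral_prod_mul] at h
  rw [← h]
  congr 1
  ext y
  simp only [MeasurableEquiv.piFinSuccAbove_apply, Fin.insertNthEquiv_symm_apply,
    Fin.removeNth_last]
  rfl

end Zeta

/-- Barnes integral expression for the archimedean `GL_n × GL_n` zeta integral
(Proposition 2.1(1) of Ishii–Stade). -/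
theorem gl_gl_zeta_barnes (n : ℕ) (hn : 2 ≤ n) (a a' : ℕ → ℂ)
    (ha : ∀ j < n, (a j).re = 0) (ha' : ∀ j < n, (a' j).re = 0)
    (s : ℂ) (hs : 0 < s.re) (c : ℕ → ℝ)
    (hc1 : ∀ j < n - 1, 0 < c j)
    (hc2 : ∀ j < n - 1, 0 < (((j + 1 : ℕ) : ℂ) * s - (c j : ℂ)).re) :
    zetaGLGL n a a' s =
      GammaR ((n : ℂ) * s + sumA n a + sumA n a') *
        ((2 : ℂ) ^ (n - 1) / (2 * (Real.pi : ℂ) * Complex.I) ^ (n - 1) *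
          VIntK (n - 1) c (fun z =>
            Ufun n a (fun j => ((j + 1 : ℕ) : ℂ) * s - z j) * Ufun n a' z)) := by
  obtain ⟨k, rfl⟩ : ∃ k, n = k + 1 := ⟨n - 1, by omega⟩
  have hW : MonomialBounded k fun y => WhittAr (k + 1) a (extR y) :=
    monomialBounded_WhittAr hn ha
  have hW' : MonomialBounded k fun y => WhittAr (k + 1) a' (extR y) :=
    monomialBounded_WhittAr hn ha'
  simp only [Nat.add_sub_cancel] at hc1 hc2 ⊢
  have hextR : Measurable (extR : (Fin k → ℝ) → ℕ → ℝ) :=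
    measurable_pi_lambda _ measurable_extR
  have hparseval := mellin_parseval hW hW'
    ((measurable_WhittAr _ a).comp hextR) ((measurable_WhittAr _ a').comp hextR)
    (σ := fun j : Fin k => ((j + 1 : ℕ) : ℂ) * s - c j) (c := fun j => (c j : ℂ))
    (fun j => hc2 j j.2) fun j => by simpa using hc1 j j.2
  have hre : 0 < (((k + 1 : ℕ) : ℂ) * s + sumA (k + 1) a + sumA (k + 1) a').re := by
    rw [add_re, add_re, sumA_re ha, sumA_re ha', add_zero, add_zero, ← ofReal_natCast,
      re_ofReal_mul]
    positivity
  have hsplit : zetaGLGL (k + 1) a a' s =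
      2 ^ (k + 1) * ((∫ u in Set.Ioi (0 : ℝ), cexp ((-(Real.pi * u ^ 2) : ℝ) : ℂ) *
        ((u : ℂ) ^ (((k + 1 : ℕ) : ℂ) * s + sumA (k + 1) a + sumA (k + 1) a') / (u : ℂ))) *
      ∫ y in posSet k, WhittAr (k + 1) a (extR y) * WhittAr (k + 1) a' (extR y) *
        ∏ j : Fin k, (y j : ℂ) ^ (((j + 1 : ℕ) : ℂ) * s - c j + c j) / (y j : ℂ)) := by
    rw [← integral_posSet_succ k (fun u => cexp ((-(Real.pi * u ^ 2) : ℝ) : ℂ) *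
        ((u : ℂ) ^ (((k + 1 : ℕ) : ℂ) * s + sumA (k + 1) a + sumA (k + 1) a') / (u : ℂ)))
      (fun y => WhittAr (k + 1) a (extR y) * WhittAr (k + 1) a' (extR y) *
        ∏ j : Fin k, (y j : ℂ) ^ (((j + 1 : ℕ) : ℂ) * s - c j + c j) / (y j : ℂ)), zetaGLGL]
    congr 1
    refine setIntegral_congr_fun (measurableSet_posSet _) fun y hy => ?_
    have hlast : extR y k = y (Fin.last k) := extR_coe y (Fin.last k)
    have hinit : ∀ j : Fin k, extR y j = y j.castSucc := fun j => extR_coe y j.castSucc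
    have hcongr : ∀ b, WhittAr (k + 1) b (extR y) =
        WhittAr (k + 1) b (extR fun j : Fin k => y j.castSucc) := fun b =>
      WhittAr_congr _ _ fun j hj =>
        (hinit ⟨j, hj⟩).trans (extR_coe (fun j : Fin k => y j.castSucc) ⟨j, hj⟩).symm
    have hne : (y (Fin.last k) : ℂ) ≠ 0 := by exact_mod_cast (hy (Fin.last k)).ne'
    simp only [WhittAhat, Nat.add_sub_cancel, hlast, hcongr, Finset.prod_range_succ,
      Finset.prod_range, hinit, sub_add_cancel, cpow_add _ _ hne]
    ring
  rw [hsplit, hparseval, ← two_mul_integral_exp_neg_sq_mul_cpow hre, VIntK]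
  have hU : ∀ (b w : ℕ → ℂ), Ufun (k + 1) b w = ∫ y in posSet k,
      WhittAr (k + 1) b (extR y) * ∏ j : Fin k, (y j : ℂ) ^ w j / (y j : ℂ) := fun b w => by
    refine integral_congr_ae (.of_forall fun y => ?_)
    exact congrArg (WhittAr (k + 1) b (extR y) * ·)
      (prod_range_extR y fun j x => (x : ℂ) ^ w j / (x : ℂ))
  have hext0 : ∀ (t : Fin k → ℝ) (j : Fin k), extR0 t j = t j := fun t j => by simp [extR0]
  simp only [hU, hext0, ← sub_sub]
  rw [mul_pow (2 * (Real.pi : ℂ)) I k]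
  have hpi : (2 * Real.pi : ℂ) ^ k ≠ 0 :=
    pow_ne_zero _ (mul_ne_zero two_ne_zero (by exact_mod_cast Real.pi_ne_zero))
  have hI : I ^ k ≠ 0 := pow_ne_zero _ I_ne_zero
  generalize (∫ u in Set.Ioi (0 : ℝ), _ : ℂ) = A
  generalize (∫ t : Fin k → ℝ, _ : ℂ) = B
  field_simp
  ring

end
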